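/- Assume a₁₂ is of class C^{2,1} on [−1,1]². For every u ∈ C⁴([−1,1]²) there exists a constant C > 0 such that for every even N ≥ 4 (h = 2/N) and every interior grid node (x,y), |(L_h⁻ u)(x,y) − ( ∂x(a₁₂ ∂y u)(x,y) + ∂y(a₁₂ ∂x u)(x,y) )| ≤ C h². -/

import Mathlib

open Set

noncomputable section

/-- The closed square `[-1,1]²` as a subset of `ℝ × ℝ`. -/
def Q2 : Set (ℝ × ℝ) := Set.Icc ((-1 : ℝ), (-1 : ℝ)) (1, 1)

/-- Partial derivative in the first coordinate direction. -/
def px (f : ℝ × ℝ → ℝ) (z : ℝ × ℝ) : ℝ := fderiv ℝ f z (1, 0)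

/-- Partial derivative in the second coordinate direction. -/
def py (f : ℝ × ℝ → ℝ) (z : ℝ × ℝ) : ℝ := fderiv ℝ f z (0, 1)

/-- `f` is of class `C^{2,1}` on `s`: twice continuously differentiable with Lipschitz
continuous second derivatives. -/
def C21On (f : ℝ × ℝ → ℝ) (s : Set (ℝ × ℝ)) : Prop :=
  ContDiffOn ℝ 2 f s ∧ ∃ K : NNReal, LipschitzOnWith K (iteratedFDerivWithin ℝ 2 f s) s

/-- Grid node `(x_i, y_j) = (-1 + i h, -1 + j h)` with `h = 2/N`. -/
def nodePt (N i j : ℕ) : ℝ × ℝ := (-1 + i * (2 / (N : ℝ)), -1 + j * (2 / (N : ℝ)))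

/-- The mixed-term operator `L_h⁻` (designed for negative `a₁₂`). -/
def Lhm (a12 : ℝ × ℝ → ℝ) (h : ℝ) (v : ℝ × ℝ → ℝ) (z : ℝ × ℝ) : ℝ :=
  (1 / (2 * h ^ 2)) *
    (-(a12 (z.1 - h / 2, z.2 + h) + a12 (z.1 - h, z.2 + h / 2)) * v (z.1 - h, z.2 + h)
      + (a12 (z.1 - h / 2, z.2 + h) + a12 (z.1, z.2 + h / 2)) * v (z.1, z.2 + h)
      + (a12 (z.1 - h, z.2 + h / 2) + a12 (z.1 - h / 2, z.2)) * v (z.1 - h, z.2)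
      - (a12 (z.1, z.2 + h / 2) + a12 (z.1 - h / 2, z.2)
          + a12 (z.1, z.2 - h / 2) + a12 (z.1 + h / 2, z.2)) * v z
      + (a12 (z.1 + h, z.2 - h / 2) + a12 (z.1 + h / 2, z.2)) * v (z.1 + h, z.2)
      + (a12 (z.1, z.2 - h / 2) + a12 (z.1 + h / 2, z.2 - h)) * v (z.1, z.2 - h)
      - (a12 (z.1 + h, z.2 - h / 2) + a12 (z.1 + h / 2, z.2 - h)) * v (z.1 + h, z.2 - h))

/-- The mixed-term operator `L_h⁺` (designed for nonnegative `a₁₂`). -/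
def Lhp (a12 : ℝ × ℝ → ℝ) (h : ℝ) (v : ℝ × ℝ → ℝ) (z : ℝ × ℝ) : ℝ :=
  (1 / (2 * h ^ 2)) *
    (-(a12 (z.1 + h / 2, z.2 + h) + a12 (z.1, z.2 + h / 2)) * v (z.1, z.2 + h)
      + (a12 (z.1 + h / 2, z.2 + h) + a12 (z.1 + h, z.2 + h / 2)) * v (z.1 + h, z.2 + h)
      - (a12 (z.1 - h, z.2 - h / 2) + a12 (z.1 - h / 2, z.2)) * v (z.1 - h, z.2)
      + (a12 (z.1, z.2 + h / 2) + a12 (z.1 - h / 2, z.2)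
          + a12 (z.1, z.2 - h / 2) + a12 (z.1 + h / 2, z.2)) * v z
      - (a12 (z.1 + h, z.2 + h / 2) + a12 (z.1 + h / 2, z.2)) * v (z.1 + h, z.2)
      + (a12 (z.1 - h, z.2 - h / 2) + a12 (z.1 - h / 2, z.2 - h)) * v (z.1 - h, z.2 - h)
      - (a12 (z.1, z.2 - h / 2) + a12 (z.1 - h / 2, z.2 - h)) * v (z.1, z.2 - h))

/-!
Up to the factor `2h²`, the operator `L_h⁻` is a sum of four nested central differences
`δ_c (a · δ_e u)` with `δ_d f (z) = f (z + d) - f (z - d)`. Splitting `a` at `z ± c` and `δ_e u`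
at `z ± c` into parts even and odd under reflection in `z` turns such a difference into products
of symmetric expressions in `a` and in `u` at `z ± (c + e)`, `z ± (c - e)`, whose Taylor expansions
have no terms of the wrong parity. Hence `δ_c (a · δ_e u) = 4 ∂_c (a ∂_e u) + O(h⁴)` with only
`a ∈ C^{2,1}` and `u ∈ C^{3,1}`. As `∂_c (a ∂_e u)` is bilinear in `(c, e)`, the four leading terms
add up to `2h² (∂x (a ∂y u) + ∂y (a ∂x u))`.
-/

open Metric
open scoped Nat NNReal Topology

section Taylor

variable {E F : Type*} [NormedAddCommGroup E] [NormedSpace ℝ E] [NormedAddCommGroup F]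
  [NormedSpace ℝ F]

theorem hasDerivAt_pow_succ_div_factorial (n : ℕ) (t : ℝ) :
    HasDerivAt (fun x : ℝ => x ^ (n + 1) / (n + 1)!) (t ^ n / n !) t := by
  refine ((hasDerivAt_pow (n + 1) t).div_const _).congr_deriv ?_
  rw [Nat.add_sub_cancel, Nat.factorial_succ, Nat.cast_mul]
  exact mul_div_mul_left _ _ (Nat.cast_ne_zero.2 n.succ_ne_zero)

theorem hasDerivAt_sum_pow_div_factorial_smul (v : ℕ → F) (n : ℕ) (t : ℝ) :
    HasDerivAt (fun x : ℝ => ∑ k ∈ Finset.range (n + 1), (x ^ k / k !) • v k)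
      (∑ k ∈ Finset.range n, (t ^ k / k !) • v (k + 1)) t := by
  simp only [Finset.sum_range_succ', pow_zero]
  exact (HasDerivAt.fun_sum fun k _ =>
    (hasDerivAt_pow_succ_div_factorial k t).smul_const (v (k + 1))).add_const _

theorem norm_sub_sum_pow_div_factorial_smul_le {G : ℕ → ℝ → F} {b B : ℝ} {n : ℕ}
    (hG : ∀ k < n, ∀ t ∈ Icc 0 b, HasDerivWithinAt (G k) (G (k + 1) t) (Icc 0 b) t)
    (hB : ∀ t ∈ Icc 0 b, ‖G n t - G n 0‖ ≤ B * t) {t : ℝ} (ht : t ∈ Icc 0 b) :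
    ‖G 0 t - ∑ k ∈ Finset.range (n + 1), (t ^ k / k !) • G k 0‖
      ≤ B * (t ^ (n + 1) / (n + 1)!) := by
  induction n generalizing G t with
  | zero => simpa using hB t ht
  | succ n ih =>
    have hderiv : ∀ x ∈ Icc 0 b, HasDerivWithinAt
        (fun x => G 0 x - ∑ k ∈ Finset.range (n + 2), (x ^ k / k !) • G k 0)
        (G 1 x - ∑ k ∈ Finset.range (n + 1), (x ^ k / k !) • G (k + 1) 0) (Icc 0 b) x :=
      fun x hx => (hG 0 n.succ_pos x hx).sub
        (hasDerivAt_sum_pow_div_factorial_smul (fun k => G k 0) (n + 1) x).hasDerivWithinAt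
    refine image_norm_le_of_norm_deriv_right_le_deriv_boundary
      (fun x hx => (hderiv x hx).continuousWithinAt)
      (fun x hx => (hderiv x (Ico_subset_Icc_self hx)).mono_of_mem_nhdsWithin
        (Icc_mem_nhdsGE_of_mem hx)) ?_
      (fun x => (hasDerivAt_pow_succ_div_factorial (n + 1) x).const_mul B)
      (fun x hx => ih (G := fun k => G (k + 1)) (fun k hk => hG (k + 1) (by lia)) hB
        (Ico_subset_Icc_self hx)) ht
    simp [Finset.sum_range_succ']

variable {f : E → F} {s : Set E} {z d : E} {n : ℕ} {K : ℝ≥0}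

theorem hasDerivWithinAt_iteratedFDerivWithin_add_smul (hs : Convex ℝ s) (hs' : UniqueDiffOn ℝ s)
    (hf : ContDiffOn ℝ (n + 1) f s) (hz : z ∈ s) (hd : z + d ∈ s) {t : ℝ} (ht : t ∈ Icc (0 : ℝ) 1) :
    HasDerivWithinAt (fun x : ℝ => iteratedFDerivWithin ℝ n f s (z + x • d) fun _ => d)
      (iteratedFDerivWithin ℝ (n + 1) f s (z + t • d) fun _ => d) (Icc 0 1) t := by
  have hseg : MapsTo (fun x : ℝ => z + x • d) (Icc 0 1) s := fun x hx => hs.add_smul_mem hz hd hx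
  have hline : HasDerivWithinAt (fun x : ℝ => z + x • d) d (Icc 0 1) t := by
    simpa using ((hasDerivWithinAt_id t (Icc (0 : ℝ) 1)).smul_const d).const_add z
  have hdiff := hf.differentiableOn_iteratedFDerivWithin (m := n) (by exact_mod_cast n.lt_succ_self)
    hs' _ (hseg ht)
  exact (hdiff.hasFDerivWithinAt.continuousMultilinear_apply_const fun _ =>
    d).comp_hasDerivWithinAt t hline hseg

theorem norm_sub_sum_iteratedFDerivWithin_le (hs : Convex ℝ s) (hs' : UniqueDiffOn ℝ s)
    (hf : ContDiffOn ℝ n f s) (hK : LipschitzOnWith K (iteratedFDerivWithin ℝ n f s) s)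
    (hz : z ∈ s) (hd : z + d ∈ s) :
    ‖f (z + d) - ∑ k ∈ Finset.range (n + 1),
      (k ! : ℝ)⁻¹ • iteratedFDerivWithin ℝ k f s z fun _ => d‖
        ≤ K * ‖d‖ ^ (n + 1) / (n + 1)! := by
  have hlip : ∀ t ∈ Icc (0 : ℝ) 1,
      ‖iteratedFDerivWithin ℝ n f s (z + t • d) (fun _ => d)
        - iteratedFDerivWithin ℝ n f s (z + (0 : ℝ) • d) fun _ => d‖
          ≤ K * ‖d‖ ^ (n + 1) * t := by
    intro t ht
    have hop := (iteratedFDerivWithin ℝ n f s (z + t • d)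
      - iteratedFDerivWithin ℝ n f s z).le_opNorm fun _ => d
    have hnorm := hK.norm_sub_le (hs.add_smul_mem hz hd ht) hz
    rw [add_sub_cancel_left, norm_smul, Real.norm_of_nonneg ht.1] at hnorm
    rw [Fin.prod_const] at hop
    rw [zero_smul, add_zero]
    calc _ ≤ _ := hop
      _ ≤ K * (t * ‖d‖) * ‖d‖ ^ n := by gcongr
      _ = _ := by ring
  have htaylor := norm_sub_sum_pow_div_factorial_smul_le
    (G := fun k t => iteratedFDerivWithin ℝ k f s (z + t • d) fun _ => d)
    (fun k hk _ ht => hasDerivWithinAt_iteratedFDerivWithin_add_smul hs hs'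
      (hf.of_le (by exact_mod_cast hk)) hz hd ht) hlip (right_mem_Icc.2 zero_le_one)
  simpa [div_eq_mul_inv, mul_assoc] using htaylor

theorem norm_sub_sum_neg_one_pow_smul_iteratedFDerivWithin_le (hs : Convex ℝ s)
    (hs' : UniqueDiffOn ℝ s) (hf : ContDiffOn ℝ n f s)
    (hK : LipschitzOnWith K (iteratedFDerivWithin ℝ n f s) s) (hz : z ∈ s) (hd : z - d ∈ s) :
    ‖f (z - d) - ∑ k ∈ Finset.range (n + 1),
      ((-1) ^ k / k ! : ℝ) • iteratedFDerivWithin ℝ k f s z fun _ => d‖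
        ≤ K * ‖d‖ ^ (n + 1) / (n + 1)! := by
  have hneg : ∀ k, (iteratedFDerivWithin ℝ k f s z fun _ => -d)
      = (-1 : ℝ) ^ k • iteratedFDerivWithin ℝ k f s z fun _ => d := fun k => by
    simpa using (iteratedFDerivWithin ℝ k f s z).map_smul_univ (fun _ => (-1 : ℝ)) fun _ => d
  have htaylor := norm_sub_sum_iteratedFDerivWithin_le hs hs' hf hK hz (d := -d)
    (by rwa [← sub_eq_add_neg])
  simpa only [hneg, smul_smul, norm_neg, ← sub_eq_add_neg, inv_mul_eq_div] using htaylor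

end Taylor

section SymmetricDifference

variable {E F : Type*} [NormedAddCommGroup E] [NormedSpace ℝ E] [NormedAddCommGroup F]
  [NormedSpace ℝ F] {f : E → F} {s : Set E} {z d : E} {K : ℝ≥0}

/-- The unnormalized central difference of `f` with nodes `z ± d`. -/
def centralDiff (d : E) (f : E → F) (z : E) : F := f (z + d) - f (z - d)

/-- The sum of the values of `f` at `z ± d`: twice the part of `f` that is even under reflection
in `z`, where `centralDiff` is twice the odd part. -/
def centralSum (d : E) (f : E → F) (z : E) : F := f (z + d) + f (z - d)

theorem norm_centralDiff_sub_le (hs : Convex ℝ s) (hs' : UniqueDiffOn ℝ s)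
    (hf : ContDiffOn ℝ 2 f s) (hK : LipschitzOnWith K (iteratedFDerivWithin ℝ 2 f s) s)
    (hz : z ∈ s) (hadd : z + d ∈ s) (hsub : z - d ∈ s) :
    ‖centralDiff d f z - (2 : ℝ) • fderivWithin ℝ f s z d‖ ≤ K * ‖d‖ ^ 3 / 3 := by
  have h₁ := norm_sub_sum_iteratedFDerivWithin_le hs hs' hf hK hz hadd
  have h₂ := norm_sub_sum_neg_one_pow_smul_iteratedFDerivWithin_le hs hs' hf hK hz hsub
  refine (le_of_eq ?_).trans ((norm_sub_le_of_le h₁ h₂).trans_eq ?_)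
  · simp only [centralDiff, Finset.sum_range_succ, Finset.sum_range_zero,
      iteratedFDerivWithin_zero_apply, iteratedFDerivWithin_one_apply (hs' z hz)]
    congr 1
    match_scalars <;> norm_num
  · norm_num [Nat.factorial]
    ring

theorem norm_centralSum_sub_two_smul_le (hs : Convex ℝ s) (hs' : UniqueDiffOn ℝ s)
    (hf : ContDiffOn ℝ 1 f s) (hK : LipschitzOnWith K (iteratedFDerivWithin ℝ 1 f s) s)
    (hz : z ∈ s) (hadd : z + d ∈ s) (hsub : z - d ∈ s) :
    ‖centralSum d f z - (2 : ℝ) • f z‖ ≤ K * ‖d‖ ^ 2 := by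
  have h₁ := norm_sub_sum_iteratedFDerivWithin_le hs hs' hf hK hz hadd
  have h₂ := norm_sub_sum_neg_one_pow_smul_iteratedFDerivWithin_le hs hs' hf hK hz hsub
  refine (le_of_eq ?_).trans ((norm_add_le_of_le h₁ h₂).trans_eq ?_)
  · simp only [centralSum, Finset.sum_range_succ, Finset.sum_range_one,
      iteratedFDerivWithin_zero_apply]
    congr 1
    match_scalars <;> norm_num
  · norm_num [Nat.factorial]

theorem norm_centralSum_sub_two_smul_sub_le (hs : Convex ℝ s) (hs' : UniqueDiffOn ℝ s)
    (hf : ContDiffOn ℝ 3 f s) (hK : LipschitzOnWith K (iteratedFDerivWithin ℝ 3 f s) s)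
    (hz : z ∈ s) (hadd : z + d ∈ s) (hsub : z - d ∈ s) :
    ‖centralSum d f z - (2 : ℝ) • f z - iteratedFDerivWithin ℝ 2 f s z fun _ => d‖
      ≤ K * ‖d‖ ^ 4 / 12 := by
  have h₁ := norm_sub_sum_iteratedFDerivWithin_le hs hs' hf hK hz hadd
  have h₂ := norm_sub_sum_neg_one_pow_smul_iteratedFDerivWithin_le hs hs' hf hK hz hsub
  refine (le_of_eq ?_).trans ((norm_add_le_of_le h₁ h₂).trans_eq ?_)
  · simp only [centralSum, Finset.sum_range_succ, Finset.sum_range_zero,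
      iteratedFDerivWithin_zero_apply]
    congr 1
    match_scalars <;> norm_num
  · norm_num [Nat.factorial]
    ring

end SymmetricDifference

section ContDiffLipOn

variable {E F : Type*} [NormedAddCommGroup E] [NormedSpace ℝ E] [NormedAddCommGroup F]
  [NormedSpace ℝ F] {f : E → F} {s : Set E} {z d : E} {n : ℕ} {M : ℝ≥0}

/-- The ball of radius `M` of the Hölder space `C^{n,1}(s)`: functions of class `C^n` whose
derivatives up to order `n` are bounded by `M` and whose `n`-th derivative is `M`-Lipschitz. -/
structure ContDiffLipOn (n : ℕ) (M : ℝ≥0) (f : E → F) (s : Set E) : Prop where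
  contDiffOn : ContDiffOn ℝ n f s
  norm_iteratedFDerivWithin_le : ∀ k ≤ n, ∀ z ∈ s, ‖iteratedFDerivWithin ℝ k f s z‖ ≤ M
  lipschitzOnWith : LipschitzOnWith M (iteratedFDerivWithin ℝ n f s) s

theorem lipschitzOnWith_iteratedFDerivWithin (hs : Convex ℝ s) (hs' : UniqueDiffOn ℝ s)
    (hf : ContDiffOn ℝ (n + 1) f s) (hM : ∀ z ∈ s, ‖iteratedFDerivWithin ℝ (n + 1) f s z‖ ≤ M) :
    LipschitzOnWith M (iteratedFDerivWithin ℝ n f s) s := by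
  refine hs.lipschitzOnWith_of_nnnorm_fderivWithin_le
    (hf.differentiableOn_iteratedFDerivWithin (by exact_mod_cast n.lt_succ_self) hs') fun z hz => ?_
  rw [← NNReal.coe_le_coe, coe_nnnorm, norm_fderivWithin_iteratedFDerivWithin]
  exact hM z hz

theorem exists_lipschitzOnWith_iteratedFDerivWithin (hs : Convex ℝ s) (hs' : UniqueDiffOn ℝ s)
    (hsc : IsCompact s) (hf : ContDiffOn ℝ (n + 1) f s) :
    ∃ K, LipschitzOnWith K (iteratedFDerivWithin ℝ n f s) s := by
  obtain ⟨C, hC⟩ := hsc.exists_bound_of_continuousOn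
    (hf.continuousOn_iteratedFDerivWithin (m := n + 1) (by norm_cast) hs')
  exact ⟨C.toNNReal, lipschitzOnWith_iteratedFDerivWithin hs hs' hf fun z hz =>
    (hC z hz).trans C.le_coe_toNNReal⟩

namespace ContDiffLipOn

theorem exists_of_isCompact (hs' : UniqueDiffOn ℝ s) (hsc : IsCompact s)
    (hf : ContDiffOn ℝ n f s) (hlip : ∃ K, LipschitzOnWith K (iteratedFDerivWithin ℝ n f s) s) :
    ∃ M, ContDiffLipOn n M f s := by
  obtain ⟨K, hK⟩ := hlip
  have hbound : ∀ k, ∃ C : ℝ≥0, k ≤ n → ∀ z ∈ s, ‖iteratedFDerivWithin ℝ k f s z‖ ≤ C := by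
    intro k
    by_cases hk : k ≤ n
    · obtain ⟨C, hC⟩ := hsc.exists_bound_of_continuousOn
        (hf.continuousOn_iteratedFDerivWithin (by exact_mod_cast hk) hs')
      exact ⟨C.toNNReal, fun _ z hz => (hC z hz).trans C.le_coe_toNNReal⟩
    · exact ⟨0, fun h => absurd h hk⟩
  choose C hC using hbound
  refine ⟨max K ((Finset.range (n + 1)).sup C), hf, fun k hk z hz => (hC k hk z hz).trans ?_,
    hK.weaken (le_max_left _ _)⟩
  exact_mod_cast (Finset.le_sup (Finset.mem_range_succ_iff.2 hk)).trans (le_max_right _ _)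

theorem of_succ (hs : Convex ℝ s) (hs' : UniqueDiffOn ℝ s) (hf : ContDiffLipOn (n + 1) M f s) :
    ContDiffLipOn n M f s where
  contDiffOn := hf.contDiffOn.of_le (by exact_mod_cast n.le_succ)
  norm_iteratedFDerivWithin_le k hk := hf.norm_iteratedFDerivWithin_le k (hk.trans n.le_succ)
  lipschitzOnWith := lipschitzOnWith_iteratedFDerivWithin hs hs' hf.contDiffOn
    (hf.norm_iteratedFDerivWithin_le (n + 1) le_rfl)

theorem norm_apply_le (hf : ContDiffLipOn n M f s) (hz : z ∈ s) : ‖f z‖ ≤ M := by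
  simpa using hf.norm_iteratedFDerivWithin_le 0 n.zero_le z hz

theorem norm_fderivWithin_le (hf : ContDiffLipOn (n + 1) M f s) (hs' : UniqueDiffOn ℝ s)
    (hz : z ∈ s) : ‖fderivWithin ℝ f s z‖ ≤ M := by
  rw [← norm_iteratedFDerivWithin_one f (hs' z hz)]
  exact hf.norm_iteratedFDerivWithin_le 1 (by lia) z hz

theorem norm_centralDiff_le (hf : ContDiffLipOn (n + 1) M f s) (hs : Convex ℝ s)
    (hs' : UniqueDiffOn ℝ s) (hadd : z + d ∈ s) (hsub : z - d ∈ s) :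
    ‖centralDiff d f z‖ ≤ 2 * M * ‖d‖ := by
  refine (hs.norm_image_sub_le_of_norm_fderivWithin_le
    (hf.contDiffOn.differentiableOn (by norm_cast)) (fun _ hw => hf.norm_fderivWithin_le hs' hw)
    hsub hadd).trans_eq ?_
  rw [add_sub_sub_cancel, ← two_smul ℝ, norm_smul, Real.norm_two]
  ring

end ContDiffLipOn

end ContDiffLipOn

section Flux

theorem abs_mul_sub_mul_le {X x Y y B b ε δ : ℝ} (hX : |X - x| ≤ ε) (hY : |Y| ≤ B) (hx : |x| ≤ b)
    (hYy : |Y - y| ≤ δ) : |X * Y - x * y| ≤ ε * B + b * δ := by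
  have hε : 0 ≤ ε := (abs_nonneg _).trans hX
  have hb : 0 ≤ b := (abs_nonneg _).trans hx
  calc |X * Y - x * y| = |(X - x) * Y + x * (Y - y)| := by ring_nf
    _ ≤ |X - x| * |Y| + |x| * |Y - y| := by
      simpa only [abs_mul] using abs_add_le ((X - x) * Y) (x * (Y - y))
    _ ≤ ε * B + b * δ := by gcongr

variable {E F : Type*} [NormedAddCommGroup E] [NormedAddCommGroup F] {s : Set E} {z c d e : E}
  {h : ℝ} {M N : ℝ≥0}

theorem two_mul_centralDiff_mul_centralDiff (a u : E → ℝ) :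
    2 * centralDiff c (fun w => a w * centralDiff e u w) z
      = centralSum c a z * (centralSum (c + e) u z - centralSum (c - e) u z)
        + centralDiff c a z * (centralDiff (c + e) u z - centralDiff (c - e) u z) := by
  simp only [centralSum, centralDiff, ← add_assoc, sub_sub, add_sub_assoc, ← sub_add]
  ring_nf

theorem add_mem_of_closedBall_subset (hball : closedBall z h ⊆ s) (hd : ‖d‖ ≤ h) : z + d ∈ s :=
  hball (by simpa using hd)

theorem sub_mem_of_closedBall_subset (hball : closedBall z h ⊆ s) (hd : ‖d‖ ≤ h) : z - d ∈ s :=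
  hball (by simpa using hd)

variable [NormedSpace ℝ E] [NormedSpace ℝ F]

theorem iteratedFDerivWithin_two_add_sub {u : E → F} (hs : s ∈ 𝓝 z) (hs' : UniqueDiffOn ℝ s)
    (hu : ContDiffAt ℝ 2 u z) :
    (iteratedFDerivWithin ℝ 2 u s z fun _ => c + e)
        - (iteratedFDerivWithin ℝ 2 u s z fun _ => c - e)
      = (4 : ℝ) • fderiv ℝ (fderiv ℝ u) z c e := by
  have hsymm : fderiv ℝ (fderiv ℝ u) z e c = fderiv ℝ (fderiv ℝ u) z c e :=
    hu.isSymmSndFDerivAt (by simp) e c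
  rw [iteratedFDerivWithin_eq_iteratedFDeriv hs' hu (mem_of_mem_nhds hs)]
  simp only [iteratedFDeriv_two_apply, map_add, map_sub, add_apply, sub_apply, hsymm]
  module

theorem norm_centralSum_add_sub_centralSum_sub_le {u : E → F} (hs : Convex ℝ s)
    (hs' : UniqueDiffOn ℝ s) (hball : closedBall z h ⊆ s)
    (hu : ContDiffLipOn 1 N u s) (hadd : ‖c + e‖ ≤ h) (hsub : ‖c - e‖ ≤ h) :
    ‖centralSum (c + e) u z - centralSum (c - e) u z‖ ≤ 2 * N * h ^ 2 := by
  have hz : z ∈ s := hball (mem_closedBall_self ((norm_nonneg _).trans hadd))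
  have hbound : ∀ d, ‖d‖ ≤ h → ‖centralSum d u z - (2 : ℝ) • u z‖ ≤ N * h ^ 2 := fun d hd =>
    (norm_centralSum_sub_two_smul_le hs hs' hu.contDiffOn hu.lipschitzOnWith hz
      (add_mem_of_closedBall_subset hball hd) (sub_mem_of_closedBall_subset hball hd)).trans
      (by gcongr)
  calc _ = _ := by rw [sub_sub_sub_cancel_right]
    _ ≤ N * h ^ 2 + N * h ^ 2 := norm_sub_le_of_le (hbound _ hadd) (hbound _ hsub)
    _ = _ := by ring

theorem norm_centralSum_add_sub_centralSum_sub_sub_le {u : E → F} (hs : Convex ℝ s)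
    (hs' : UniqueDiffOn ℝ s) (hh : 0 < h) (hball : closedBall z h ⊆ s)
    (hu : ContDiffLipOn 3 N u s) (hadd : ‖c + e‖ ≤ h) (hsub : ‖c - e‖ ≤ h) :
    ‖centralSum (c + e) u z - centralSum (c - e) u z - (4 : ℝ) • fderiv ℝ (fderiv ℝ u) z c e‖
      ≤ N * h ^ 4 / 6 := by
  have hs_nhds : s ∈ 𝓝 z := Filter.mem_of_superset (closedBall_mem_nhds z hh) hball
  have hbound : ∀ d, ‖d‖ ≤ h →
      ‖centralSum d u z - (2 : ℝ) • u z - iteratedFDerivWithin ℝ 2 u s z fun _ => d‖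
        ≤ N * h ^ 4 / 12 := fun d hd =>
    (norm_centralSum_sub_two_smul_sub_le hs hs' hu.contDiffOn hu.lipschitzOnWith
      (mem_of_mem_nhds hs_nhds) (add_mem_of_closedBall_subset hball hd)
      (sub_mem_of_closedBall_subset hball hd)).trans (by gcongr)
  rw [← iteratedFDerivWithin_two_add_sub hs_nhds hs'
    ((hu.contDiffOn.contDiffAt hs_nhds).of_le (by norm_num))]
  refine (le_of_eq ?_).trans ((norm_sub_le_of_le (hbound _ hadd) (hbound _ hsub)).trans_eq ?_)
  · congr 1
    abel
  · ring

theorem norm_centralDiff_add_sub_centralDiff_sub_sub_le {u : E → F} (hs : Convex ℝ s)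
    (hs' : UniqueDiffOn ℝ s) (hball : closedBall z h ⊆ s)
    (hu : ContDiffLipOn 2 N u s) (hadd : ‖c + e‖ ≤ h) (hsub : ‖c - e‖ ≤ h) :
    ‖centralDiff (c + e) u z - centralDiff (c - e) u z - (4 : ℝ) • fderivWithin ℝ u s z e‖
      ≤ 2 * N * h ^ 3 / 3 := by
  have hz : z ∈ s := hball (mem_closedBall_self ((norm_nonneg _).trans hadd))
  have hbound : ∀ d, ‖d‖ ≤ h →
      ‖centralDiff d u z - (2 : ℝ) • fderivWithin ℝ u s z d‖ ≤ N * h ^ 3 / 3 := fun d hd =>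
    (norm_centralDiff_sub_le hs hs' hu.contDiffOn hu.lipschitzOnWith hz
      (add_mem_of_closedBall_subset hball hd) (sub_mem_of_closedBall_subset hball hd)).trans
      (by gcongr)
  refine (le_of_eq ?_).trans ((norm_sub_le_of_le (hbound _ hadd) (hbound _ hsub)).trans_eq ?_)
  · rw [map_add, map_sub]
    congr 1
    module
  · ring

theorem fderiv_mul_fderiv_apply {a u : E → ℝ} (ha : DifferentiableAt ℝ a z)
    (hu : DifferentiableAt ℝ (fderiv ℝ u) z) :
    fderiv ℝ (fun w => a w * fderiv ℝ u w e) z c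
      = (a z • fderiv ℝ (fderiv ℝ u) z + (fderiv ℝ a z).smulRight (fderiv ℝ u z)) c e := by
  rw [fderiv_fun_mul ha (hu.clm_apply (differentiableAt_const e)),
    fderiv_clm_apply hu (differentiableAt_const e)]
  simp [mul_comm]

theorem norm_le_of_norm_add_le_of_norm_sub_le (hadd : ‖c + e‖ ≤ h) (hsub : ‖c - e‖ ≤ h) :
    ‖c‖ ≤ h ∧ ‖e‖ ≤ h := by
  have hc : ‖c‖ = ‖(c + e) + (c - e)‖ / 2 := by
    rw [add_add_sub_cancel, ← two_smul ℝ, norm_smul, Real.norm_two]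
    ring
  have he : ‖e‖ = ‖(c + e) - (c - e)‖ / 2 := by
    rw [add_sub_sub_cancel, ← two_smul ℝ, norm_smul, Real.norm_two]
    ring
  exact ⟨by linarith [norm_add_le (c + e) (c - e)], by linarith [norm_sub_le (c + e) (c - e)]⟩

variable {a u : E → ℝ}

theorem abs_centralSum_mul_sub_le (hs : Convex ℝ s) (hs' : UniqueDiffOn ℝ s) (hh : 0 < h)
    (hball : closedBall z h ⊆ s) (ha : ContDiffLipOn 1 M a s) (hu : ContDiffLipOn 3 N u s)
    (hadd : ‖c + e‖ ≤ h) (hsub : ‖c - e‖ ≤ h) :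
    |centralSum c a z * (centralSum (c + e) u z - centralSum (c - e) u z)
      - 2 * a z * (4 * fderiv ℝ (fderiv ℝ u) z c e)| ≤ 7 / 3 * (M * N * h ^ 4) := by
  have hc : ‖c‖ ≤ h := (norm_le_of_norm_add_le_of_norm_sub_le hadd hsub).1
  have hz : z ∈ s := hball (mem_closedBall_self hh.le)
  have hsum : |centralSum c a z - 2 * a z| ≤ M * h ^ 2 :=
    (norm_centralSum_sub_two_smul_le hs hs' ha.contDiffOn ha.lipschitzOnWith hz
      (add_mem_of_closedBall_subset hball hc) (sub_mem_of_closedBall_subset hball hc)).trans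
      (by gcongr)
  have hval : |2 * a z| ≤ 2 * M := by
    rw [abs_mul, abs_two]
    exact mul_le_mul_of_nonneg_left (ha.norm_apply_le hz) zero_le_two
  refine (abs_mul_sub_mul_le hsum
    (norm_centralSum_add_sub_centralSum_sub_le hs hs' hball
      ((hu.of_succ hs hs').of_succ hs hs') hadd hsub) hval
    (norm_centralSum_add_sub_centralSum_sub_sub_le hs hs' hh hball hu hadd hsub)).trans_eq ?_
  ring

theorem abs_centralDiff_mul_sub_le (hs : Convex ℝ s) (hs' : UniqueDiffOn ℝ s) (hh : 0 < h)
    (hball : closedBall z h ⊆ s) (ha : ContDiffLipOn 2 M a s) (hu : ContDiffLipOn 2 N u s)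
    (hadd : ‖c + e‖ ≤ h) (hsub : ‖c - e‖ ≤ h) :
    |centralDiff c a z * (centralDiff (c + e) u z - centralDiff (c - e) u z)
      - 2 * fderiv ℝ a z c * (4 * fderiv ℝ u z e)| ≤ 8 / 3 * (M * N * h ^ 4) := by
  obtain ⟨hc, he⟩ := norm_le_of_norm_add_le_of_norm_sub_le hadd hsub
  have hs_nhds : s ∈ 𝓝 z := Filter.mem_of_superset (closedBall_mem_nhds z hh) hball
  have hz : z ∈ s := mem_of_mem_nhds hs_nhds
  have hc_add : z + c ∈ s := add_mem_of_closedBall_subset hball hc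
  have hc_sub : z - c ∈ s := sub_mem_of_closedBall_subset hball hc
  have hdiff : |centralDiff c a z| ≤ 2 * M * h :=
    (ha.norm_centralDiff_le hs hs' hc_add hc_sub).trans (by gcongr)
  have hdiff_sub : |centralDiff c a z - 2 * fderivWithin ℝ a s z c| ≤ M * h ^ 3 / 3 :=
    (norm_centralDiff_sub_le hs hs' ha.contDiffOn ha.lipschitzOnWith hz hc_add hc_sub).trans
      (by gcongr)
  have hderiv : |4 * fderivWithin ℝ u s z e| ≤ 4 * (N * h) := by
    rw [abs_mul, abs_of_pos four_pos]
    gcongr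
    exact (fderivWithin ℝ u s z).le_of_opNorm_le_of_le (hu.norm_fderivWithin_le hs' hz) he
  rw [← fderivWithin_of_mem_nhds hs_nhds, ← fderivWithin_of_mem_nhds hs_nhds,
    mul_comm (centralDiff c a z), mul_comm (2 * _)]
  refine (abs_mul_sub_mul_le
    (norm_centralDiff_add_sub_centralDiff_sub_sub_le hs hs' hball hu hadd hsub) hdiff hderiv
    hdiff_sub).trans_eq ?_
  ring

theorem abs_centralDiff_mul_centralDiff_sub_le (hs : Convex ℝ s) (hs' : UniqueDiffOn ℝ s)
    (hh : 0 < h) (hball : closedBall z h ⊆ s) (ha : ContDiffLipOn 2 M a s)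
    (hu : ContDiffLipOn 3 N u s) (hadd : ‖c + e‖ ≤ h) (hsub : ‖c - e‖ ≤ h) :
    |centralDiff c (fun w => a w * centralDiff e u w) z
      - 4 * (a z • fderiv ℝ (fderiv ℝ u) z + (fderiv ℝ a z).smulRight (fderiv ℝ u z)) c e|
        ≤ 5 / 2 * (M * N * h ^ 4) := by
  have heven := abs_le.1
    (abs_centralSum_mul_sub_le hs hs' hh hball (ha.of_succ hs hs') hu hadd hsub)
  have hodd := abs_le.1
    (abs_centralDiff_mul_sub_le hs hs' hh hball ha (hu.of_succ hs hs') hadd hsub)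
  have hsplit := two_mul_centralDiff_mul_centralDiff (c := c) (e := e) (z := z) a u
  simp only [add_apply, smul_apply, ContinuousLinearMap.smulRight_apply, smul_eq_mul]
  exact abs_le.2 ⟨by linarith, by linarith⟩

end Flux


section MixedOperator

theorem two_mul_sq_mul_Lhm (a u : ℝ × ℝ → ℝ) {h : ℝ} (hh : h ≠ 0) (z : ℝ × ℝ) :
    2 * h ^ 2 * Lhm a h u z
      = centralDiff (-(h / 2), h) (fun w => a w * centralDiff (h / 2, 0) u w) z
        + centralDiff (-h, h / 2) (fun w => a w * centralDiff (0, -(h / 2)) u w) z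
        + centralDiff (0, h / 2) (fun w => a w * centralDiff (0, h / 2) u w) z
        + centralDiff (-(h / 2), 0) (fun w => a w * centralDiff (-(h / 2), 0) u w) z := by
  obtain ⟨x, y⟩ := z
  rw [Lhm, ← mul_assoc, mul_one_div_cancel (by positivity), one_mul]
  simp only [centralDiff, Prod.mk_add_mk, Prod.mk_sub_mk]
  ring_nf

theorem apply_apply_eq_coord (T : ℝ × ℝ →L[ℝ] ℝ × ℝ →L[ℝ] ℝ) (p q : ℝ × ℝ) :
    T p q = p.1 * q.1 * T (1, 0) (1, 0) + p.1 * q.2 * T (1, 0) (0, 1)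
      + p.2 * q.1 * T (0, 1) (1, 0) + p.2 * q.2 * T (0, 1) (0, 1) := by
  have hcoord : ∀ w : ℝ × ℝ, w = w.1 • ((1, 0) : ℝ × ℝ) + w.2 • ((0, 1) : ℝ × ℝ) := by simp
  conv_lhs => rw [hcoord p, hcoord q]
  simp only [map_add, map_smul, add_apply, smul_apply, smul_eq_mul]
  ring

theorem sum_apply_apply_eq (T : ℝ × ℝ →L[ℝ] ℝ × ℝ →L[ℝ] ℝ) (h : ℝ) :
    T (-(h / 2), h) (h / 2, 0) + T (-h, h / 2) (0, -(h / 2)) + T (0, h / 2) (0, h / 2)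
        + T (-(h / 2), 0) (-(h / 2), 0)
      = h ^ 2 / 2 * (T (1, 0) (0, 1) + T (0, 1) (1, 0)) := by
  rw [apply_apply_eq_coord T (-(h / 2), h), apply_apply_eq_coord T (-h, h / 2),
    apply_apply_eq_coord T (0, h / 2), apply_apply_eq_coord T (-(h / 2), 0)]
  ring

variable {a u : ℝ × ℝ → ℝ} {s : Set (ℝ × ℝ)} {z : ℝ × ℝ} {h : ℝ} {M N : ℝ≥0}

theorem abs_Lhm_sub_le (hs : Convex ℝ s) (hs' : UniqueDiffOn ℝ s) (hh : 0 < h)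
    (hball : closedBall z h ⊆ s) (ha : ContDiffLipOn 2 M a s) (hu : ContDiffLipOn 3 N u s) :
    |Lhm a h u z - (px (fun w => a w * py u w) z + py (fun w => a w * px u w) z)|
      ≤ 5 * M * N * h ^ 2 := by
  have hs_nhds : s ∈ 𝓝 z := Filter.mem_of_superset (closedBall_mem_nhds z hh) hball
  have ha_diff : DifferentiableAt ℝ a z :=
    (ha.contDiffOn.contDiffAt hs_nhds).differentiableAt (by norm_num)
  have hu_diff : DifferentiableAt ℝ (fderiv ℝ u) z :=
    ((hu.contDiffOn.contDiffAt hs_nhds).fderiv_right (m := 2) (by norm_num)).differentiableAt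
      (by norm_num)
  set T := a z • fderiv ℝ (fderiv ℝ u) z + (fderiv ℝ a z).smulRight (fderiv ℝ u z)
  have hT_sum := sum_apply_apply_eq T h
  have hderiv : px (fun w => a w * py u w) z + py (fun w => a w * px u w) z
      = T (1, 0) (0, 1) + T (0, 1) (1, 0) :=
    congrArg₂ (· + ·) (fderiv_mul_fderiv_apply ha_diff hu_diff)
      (fderiv_mul_fderiv_apply ha_diff hu_diff)
  have hflux : ∀ c e : ℝ × ℝ, |c.1| + |e.1| ≤ h → |c.2| + |e.2| ≤ h →
      |centralDiff c (fun w => a w * centralDiff e u w) z - 4 * T c e|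
        ≤ 5 / 2 * (M * N * h ^ 4) := fun c e h₁ h₂ =>
    abs_centralDiff_mul_centralDiff_sub_le hs hs' hh hball ha hu
      (norm_prod_le_iff.2 ⟨(abs_add_le _ _).trans h₁, (abs_add_le _ _).trans h₂⟩)
      (norm_prod_le_iff.2 ⟨(abs_sub _ _).trans h₁, (abs_sub _ _).trans h₂⟩)
  have habs : |h / 2| = h / 2 := abs_of_pos (half_pos hh)
  have h₁ := abs_le.1 (hflux (-(h / 2), h) (h / 2, 0) (by simp [habs]) (by simp [abs_of_pos hh]))
  have h₂ := abs_le.1 (hflux (-h, h / 2) (0, -(h / 2)) (by simp [abs_of_pos hh]) (by simp [habs]))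
  have h₃ := abs_le.1 (hflux (0, h / 2) (0, h / 2) (by simp [hh.le]) (by simp [habs]))
  have h₄ := abs_le.1 (hflux (-(h / 2), 0) (-(h / 2), 0) (by simp [habs]) (by simp [hh.le]))
  have hpos : 0 < 2 * h ^ 2 := by positivity
  have hscaled : |2 * h ^ 2 * Lhm a h u z
      - 2 * h ^ 2 * (px (fun w => a w * py u w) z + py (fun w => a w * px u w) z)|
        ≤ 2 * h ^ 2 * (5 * M * N * h ^ 2) := by
    rw [hderiv, two_mul_sq_mul_Lhm a u hh.ne']
    exact abs_le.2 ⟨by linarith, by linarith⟩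
  rw [← mul_sub, abs_mul, abs_of_pos hpos] at hscaled
  exact le_of_mul_le_mul_left hscaled hpos

end MixedOperator

theorem stmt4_general {a12 u : ℝ × ℝ → ℝ} {s : Set (ℝ × ℝ)} (hs : Convex ℝ s)
    (hs' : UniqueDiffOn ℝ s) (hsc : IsCompact s) (ha12 : C21On a12 s) (hu : ContDiffOn ℝ 3 u s)
    (hu_lip : ∃ K, LipschitzOnWith K (iteratedFDerivWithin ℝ 3 u s) s) :
    ∃ C > (0 : ℝ), ∀ h > (0 : ℝ), ∀ z, closedBall z h ⊆ s →
      |Lhm a12 h u z - (px (fun w => a12 w * py u w) z + py (fun w => a12 w * px u w) z)|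
        ≤ C * h ^ 2 := by
  obtain ⟨M, hM⟩ := ContDiffLipOn.exists_of_isCompact hs' hsc ha12.1 ha12.2
  obtain ⟨N, hN⟩ := ContDiffLipOn.exists_of_isCompact hs' hsc hu hu_lip
  refine ⟨5 * M * N + 1, by positivity, fun h hh z hball =>
    (abs_Lhm_sub_le hs hs' hh hball hM hN).trans ?_⟩
  gcongr
  exact le_add_of_nonneg_right zero_le_one

section Grid

theorem convex_Q2 : Convex ℝ Q2 := convex_Icc _ _

theorem isCompact_Q2 : IsCompact Q2 := isCompact_Icc

theorem uniqueDiffOn_Q2 : UniqueDiffOn ℝ Q2 := by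
  rw [Q2, ← Icc_prod_Icc]
  exact (uniqueDiffOn_Icc (by norm_num)).prod (uniqueDiffOn_Icc (by norm_num))

theorem closedBall_nodePt_subset_Q2 {N i j : ℕ} (hi : 1 ≤ i) (hiN : i ≤ N - 1) (hj : 1 ≤ j)
    (hjN : j ≤ N - 1) : closedBall (nodePt N i j) (2 / N) ⊆ Q2 := by
  have hcoord : ∀ k : ℕ, 1 ≤ k → k ≤ N - 1 →
      closedBall (-1 + k * (2 / N : ℝ)) (2 / N) ⊆ Icc (-1) 1 := by
    intro k hk hkN
    have hN : (0 : ℝ) < N := Nat.cast_pos.2 (by lia)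
    have hk' : (1 : ℝ) ≤ k := Nat.one_le_cast.2 hk
    have hkN' : (k + 1 : ℝ) ≤ N := by exact_mod_cast (by lia : k + 1 ≤ N)
    rw [Real.closedBall_eq_Icc]
    refine Icc_subset_Icc ?_ ?_
    · have : 2 / N ≤ k * (2 / N : ℝ) := le_mul_of_one_le_left (by positivity) hk'
      linarith
    · have : (k + 1) * (2 / N : ℝ) ≤ 2 := by
        rw [mul_div_assoc', div_le_iff₀ hN]
        linarith
      linarith
  rw [Q2, ← Icc_prod_Icc, nodePt, ← closedBall_prod_same]
  exact prod_mono (hcoord i hi hiN) (hcoord j hj hjN)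

end Grid

/-- Second-order consistency of the seven-point discretization `Lhm` (the stencil designed
for negative `a₁₂`) of the mixed-derivative part `∂x(a₁₂ ∂y u) + ∂y(a₁₂ ∂x u)` at interior
grid nodes. -/
theorem stmt4 (a12 : ℝ × ℝ → ℝ) (ha12 : C21On a12 Q2)
    (u : ℝ × ℝ → ℝ) (hu : ContDiffOn ℝ 4 u Q2) :
    ∃ C > (0 : ℝ), ∀ N : ℕ, Even N → 4 ≤ N →
      ∀ i j : ℕ, 1 ≤ i → i ≤ N - 1 → 1 ≤ j → j ≤ N - 1 →
        |Lhm a12 (2 / (N : ℝ)) u (nodePt N i j) -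
            (px (fun w => a12 w * py u w) (nodePt N i j)
              + py (fun w => a12 w * px u w) (nodePt N i j))|
          ≤ C * (2 / (N : ℝ)) ^ 2 := by
  obtain ⟨C, hC, hbound⟩ := stmt4_general convex_Q2 uniqueDiffOn_Q2 isCompact_Q2 ha12
    (hu.of_le (by norm_num)) (exists_lipschitzOnWith_iteratedFDerivWithin (n := 3) convex_Q2
      uniqueDiffOn_Q2 isCompact_Q2 (by exact_mod_cast hu))
  exact ⟨C, hC, fun N _ hN i j hi hiN hj hjN => hbound _ (by positivity) _
    (closedBall_nodePt_subset_Q2 hi hiN hj hjN)⟩
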